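/- Correspondence theorem: Fix a model-state pair M,Γ, an assignment v, and the object constant i such that I(i) = (v*I)(↓id,Γ) (i.e. i is the id-value of Γ). Then for every modal query φ(ϱ₁,…,ϱₙ): M,Γ ⊩_v φ(ϱ₁,…,ϱₙ) if and only if ⟨v(ϱ₁),…,v(ϱₙ), i⟩ ∈ FT(φ(ϱ₁,…,ϱₙ))(I_M). -/

import Mathlib

namespace KripkeDB

/-- Variable kinds: object variables and concept variables. -/
inductive VKind : Type
  | obj : VKind
  | con : VKind

/-- A first-order modal model: an augmented frame `⟨G, {R_π}, D_o, D_c⟩` together with an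
interpretation `I`.  `State` is the nonempty set of states, `acc r` is the accessibility
relation `R_r` for each relation symbol `r : RelSym`, `Obj` is the nonempty object domain
`D_o`, and the `m` individual concepts (functions from states to objects, `m = |D_c|`)
are indexed by `Fin m` via the bijection `𝔠` (0-based: the concept indexed by `i` has
`𝔠`-value `i+1`).  The concept indexed by `0` is the distinguished concept `id`
(so `𝔠(id) = 1`), whose value uniquely identifies each state.  By the unique names
assumption, constants are identified with the objects/concepts they denote. -/
structure Model where
  State : Type
  state_ne : Nonempty State
  Obj : Type
  obj_ne : Nonempty Obj
  RelSym : Type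
  acc : RelSym → State → State → Prop
  m : ℕ
  m_pos : 0 < m
  concept : Fin m → State → Obj
  id_inj : ∀ Γ Δ : State, concept ⟨0, m_pos⟩ Γ = concept ⟨0, m_pos⟩ Δ → Γ = Δ

/-- Database values: the domain **dom** = D_o ∪ D_c ∪ Π consists of objects,
concept names and accessibility-relation names. -/
abbrev V (M : Model) : Type := M.Obj ⊕ (Fin M.m ⊕ M.RelSym)

/-- The id-value of a state: `(v*I)(↓id, Γ)`. -/
def idval (M : Model) (Γ : M.State) : M.Obj := M.concept ⟨0, M.m_pos⟩ Γ

/-- A relation instance: a set of tuples over the database domain. -/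
abbrev Inst (M : Model) : Type := Set (List (V M))

noncomputable def deflt (M : Model) : V M := Sum.inl (Classical.choice M.obj_ne)

/-- 1-based attribute access `t(j)`. -/
noncomputable def att (M : Model) (t : List (V M)) (j : ℕ) : V M := t.getD (j - 1) (deflt M)

/-- Projection `π_{j₁,…,jₚ}`. -/
noncomputable def proj (M : Model) (js : List ℕ) (I : Inst M) : Inst M :=
  { u | ∃ t ∈ I, u = js.map (att M t) }

/-- Selection `σ_{j=k}` (attribute `j` equals attribute `k`). -/
noncomputable def selEq (M : Model) (j k : ℕ) (I : Inst M) : Inst M :=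
  { t | t ∈ I ∧ att M t j = att M t k }

/-- Selection `σ_{j=c}` (attribute `j` equals the constant `c`). -/
noncomputable def selC (M : Model) (j : ℕ) (c : V M) (I : Inst M) : Inst M :=
  { t | t ∈ I ∧ att M t j = c }

/-- Cross product `I × J`. -/
def cprod (M : Model) (I J : Inst M) : Inst M :=
  { l | ∃ t ∈ I, ∃ u ∈ J, l = t ++ u }

/-- The `Sta`-tuple of a state `Γ`: its `i`-th entry is the value at `Γ` of the concept
with `𝔠`-value `i`. -/
def staTuple (M : Model) (Γ : M.State) : List (V M) :=
  List.ofFn (fun i : Fin M.m => Sum.inl (M.concept i Γ))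

/-- The instance of the relation `Sta` in the database instance `I_M` associated with `M`. -/
def Sta (M : Model) : Inst M := { l | ∃ Γ : M.State, l = staTuple M Γ }

/-- The instance of the unary relation `Obj` (instance `D_o`) in `I_M`. -/
def ObjI (M : Model) : Inst M := { l | ∃ o : M.Obj, l = [Sum.inl o] }

/-- The instance of the unary relation `Con` (instance `D_c`) in `I_M`. -/
def ConI (M : Model) : Inst M := { l | ∃ c : Fin M.m, l = [Sum.inr (Sum.inl c)] }

/-- The instance of the ternary relation `Rel` in `I_M`: it contains `⟨a,b,π⟩` iff
`R_π(Γ,Δ)` where `a,b` are the id-values of `Γ,Δ`. -/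
def RelI (M : Model) : Inst M :=
  { l | ∃ (r : M.RelSym) (Γ Δ : M.State), M.acc r Γ Δ ∧
      l = [Sum.inl (idval M Γ), Sum.inl (idval M Δ), Sum.inr (Sum.inr r)] }

/-- Membership of a database value in the domain of a variable kind
(`D_o` for object variables, `D_c` for concept variables). -/
def kindOk (M : Model) : VKind → V M → Prop
  | VKind.obj, x => ∃ o : M.Obj, x = Sum.inl o
  | VKind.con, x => ∃ c : Fin M.m, x = Sum.inr (Sum.inl c)

/-- `VT(ϱ₁,…,ϱₙ)`: the cross product `D₁ × … × Dₙ` of the domain relations, where `Dᵢ`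
is `Con` for a concept variable and `Obj` for an object variable
(for the empty list this is `{⟨⟩}`). -/
def VTl (M : Model) (ks : List VKind) : Inst M :=
  { l | List.Forall₂ (kindOk M) ks l }

/-- Object terms: object constants (identified with objects via unique names),
object variables (de Bruijn index `k` denotes the variable `ϱ_{k+1}`), and
relativized concept terms `↓c` for a concept constant `c`. -/
inductive OTm (M : Model) : Type
  | const : M.Obj → OTm M
  | var : ℕ → OTm M
  | down : Fin M.m → OTm M

/-- Term evaluation `(v*I)(·, Γ)`. -/
def teval (M : Model) (v : ℕ → V M) (Γ : M.State) : OTm M → V M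
  | OTm.const o => Sum.inl o
  | OTm.var k => v k
  | OTm.down c => Sum.inl (M.concept c Γ)

/-- The result of the term translation `TT`: an attribute index or a constant. -/
inductive TTRes (M : Model) : Type
  | idx : ℕ → TTRes M
  | con : V M → TTRes M

/-- The term translation `TT` with `n` variables in scope: `TT(c) = 'c'` for an object
constant, `TT(ϱ_k) = k`, and `TT(↓t) = n + 𝔠(t)` for a relativized term. -/
def TT (M : Model) (n : ℕ) : OTm M → TTRes M
  | OTm.const o => TTRes.con (Sum.inl o)
  | OTm.var k => TTRes.idx (k + 1)
  | OTm.down c => TTRes.idx (n + (c.val + 1))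

/-- The value in tuple `t` designated by a `TT`-result. -/
noncomputable def ttval (M : Model) (t : List (V M)) : TTRes M → V M
  | TTRes.idx j => att M t j
  | TTRes.con c => c

/-- Generalized selection `σ_{a=b}` where each side is an attribute index or a constant. -/
noncomputable def selT (M : Model) (a b : TTRes M) (I : Inst M) : Inst M :=
  { t | t ∈ I ∧ ttval M t a = ttval M t b }

/-- Generalized selection `σ_{a≠b}`. -/
noncomputable def selTne (M : Model) (a b : TTRes M) (I : Inst M) : Inst M :=
  { t | t ∈ I ∧ ttval M t a ≠ ttval M t b }

/-- The set of (indices of) variables occurring in a term. -/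
def tvars (M : Model) : OTm M → Set ℕ
  | OTm.var k => {k}
  | _ => ∅

/-- Formulas of the modal language.  Binders (`ex`, `all`, `lam`) bind the de Bruijn
variable `0`; in `⟨λϱ.φ⟩(↓c)` the abstracted variable is an object variable and the
argument term is the relativized concept term `↓c`. -/
inductive Fma (M : Model) : Type
  | eq : OTm M → OTm M → Fma M
  | ne : OTm M → OTm M → Fma M
  | not : Fma M → Fma M
  | and : Fma M → Fma M → Fma M
  | or : Fma M → Fma M → Fma M
  | dia : M.RelSym → Fma M → Fma M
  | box : M.RelSym → Fma M → Fma M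
  | ex : VKind → Fma M → Fma M
  | all : VKind → Fma M → Fma M
  | lam : Fin M.m → Fma M → Fma M

/-- Extending an assignment with a value for the freshly bound variable. -/
def consA (M : Model) (d : V M) (v : ℕ → V M) : ℕ → V M
  | 0 => d
  | k + 1 => v k

/-- Truth in a model: `M,Γ ⊩_v φ`. -/
def Truth (M : Model) : M.State → (ℕ → V M) → Fma M → Prop
  | Γ, v, Fma.eq t₁ t₂ => teval M v Γ t₁ = teval M v Γ t₂
  | Γ, v, Fma.ne t₁ t₂ => teval M v Γ t₁ ≠ teval M v Γ t₂
  | Γ, v, Fma.not φ => ¬ Truth M Γ v φ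
  | Γ, v, Fma.and φ ψ => Truth M Γ v φ ∧ Truth M Γ v ψ
  | Γ, v, Fma.or φ ψ => Truth M Γ v φ ∨ Truth M Γ v ψ
  | Γ, v, Fma.dia r φ => ∃ Δ : M.State, M.acc r Γ Δ ∧ Truth M Δ v φ
  | Γ, v, Fma.box r φ => ∀ Δ : M.State, M.acc r Γ Δ → Truth M Δ v φ
  | Γ, v, Fma.ex k φ => ∃ d : V M, kindOk M k d ∧ Truth M Γ (consA M d v) φ
  | Γ, v, Fma.all k φ => ∀ d : V M, kindOk M k d → Truth M Γ (consA M d v) φ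
  | Γ, v, Fma.lam c φ => Truth M Γ (consA M (Sum.inl (M.concept c Γ)) v) φ

/-- The translation `FT` of modal queries into relational algebra queries, evaluated on
`I_M`.  `ks` is the list of kinds of the free variables `ϱ₁,…,ϱₙ` (so `n = ks.length`).
The box clause is `FT([π]φ) = FT(¬⟨π⟩¬φ)`, written out. -/
noncomputable def FT (M : Model) : List VKind → Fma M → Inst M
  | ks, Fma.eq t₁ t₂ =>
      proj M (List.range' 1 (ks.length + 1))
        (selT M (TT M ks.length t₁) (TT M ks.length t₂) (cprod M (VTl M ks) (Sta M)))
  | ks, Fma.ne t₁ t₂ =>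
      proj M (List.range' 1 (ks.length + 1))
        (selTne M (TT M ks.length t₁) (TT M ks.length t₂) (cprod M (VTl M ks) (Sta M)))
  | ks, Fma.not φ =>
      cprod M (VTl M ks) (proj M [1] (Sta M)) \ FT M ks φ
  | ks, Fma.and φ ψ => FT M ks φ ∩ FT M ks ψ
  | ks, Fma.or φ ψ => FT M ks φ ∪ FT M ks ψ
  | ks, Fma.dia r φ =>
      proj M (List.range' 1 ks.length ++ [ks.length + 2])
        (selC M (ks.length + 4) (Sum.inr (Sum.inr r))
          (selEq M (ks.length + 1) (ks.length + 3) (cprod M (FT M ks φ) (RelI M))))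
  | ks, Fma.box r φ =>
      cprod M (VTl M ks) (proj M [1] (Sta M)) \
        proj M (List.range' 1 ks.length ++ [ks.length + 2])
          (selC M (ks.length + 4) (Sum.inr (Sum.inr r))
            (selEq M (ks.length + 1) (ks.length + 3)
              (cprod M (cprod M (VTl M ks) (proj M [1] (Sta M)) \ FT M ks φ) (RelI M))))
  | ks, Fma.ex k φ =>
      proj M (List.range' 2 (ks.length + 1)) (FT M (k :: ks) φ)
  | ks, Fma.all k φ =>
      proj M (List.range' 2 (ks.length + 1)) (FT M (k :: ks) φ) \
        proj M (List.range' 2 (ks.length + 1))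
          (cprod M (VTl M [k]) (proj M (List.range' 2 (ks.length + 1)) (FT M (k :: ks) φ)) \
            FT M (k :: ks) φ)
  | ks, Fma.lam c φ =>
      proj M (List.range' 2 (ks.length + 1))
        (selEq M 1 (ks.length + 3)
          (selEq M (ks.length + 2) (ks.length + 4)
            (cprod M (FT M (VKind.obj :: ks) φ) (proj M [c.val + 1, 1] (Sta M)))))

/-- Well-formedness of a term in a context of variable kinds. -/
def WFt (M : Model) (ks : List VKind) : OTm M → Prop
  | OTm.const _ => True
  | OTm.var k => ks[k]? = some VKind.obj
  | OTm.down _ => True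

/-- Well-formedness of a formula in a context of variable kinds: a modal query
`φ(ϱ₁,…,ϱₙ)` is a well-formed formula whose free variables are among `ϱ₁,…,ϱₙ`. -/
def WF (M : Model) : List VKind → Fma M → Prop
  | ks, Fma.eq t₁ t₂ => WFt M ks t₁ ∧ WFt M ks t₂
  | ks, Fma.ne t₁ t₂ => WFt M ks t₁ ∧ WFt M ks t₂
  | ks, Fma.not φ => WF M ks φ
  | ks, Fma.and φ ψ => WF M ks φ ∧ WF M ks ψ
  | ks, Fma.or φ ψ => WF M ks φ ∧ WF M ks ψ
  | ks, Fma.dia _ φ => WF M ks φ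
  | ks, Fma.box _ φ => WF M ks φ
  | ks, Fma.ex k φ => WF M (k :: ks) φ
  | ks, Fma.all k φ => WF M (k :: ks) φ
  | ks, Fma.lam _ φ => WF M (VKind.obj :: ks) φ

/-- An assignment conforms to a context of kinds if it maps object variables into `D_o`
and concept variables into `D_c`. -/
def Conf (M : Model) (ks : List VKind) (v : ℕ → V M) : Prop :=
  ∀ k : Fin ks.length, kindOk M (ks.get k) (v k)

/-!
The relation `FT φ` evaluated on `I_M` consists of exactly the tuples `⟨a₁,…,aₙ, id(Δ)⟩` such that
each `aᵢ` lies in the domain of `ϱᵢ` and `φ` holds at `Δ` under `ϱᵢ ↦ aᵢ`. Because `id` is injective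
such a tuple determines both the values `aᵢ` and the state `Δ`. Hence, on relations of this form,
complement, intersection, union, the join with `Rel`, the join with `Sta`, projection and division
act on the defining predicate as `¬`, `∧`, `∨`, `⟨π⟩`, `⟨λϱ.·⟩(↓c)`, `∃` and `∀`, and an
induction on `φ` concludes.
-/

variable {M : Model}

section Attributes

theorem att_succ_append {l : List (V M)} {k : ℕ} (hk : k < l.length) (s : List (V M)) :
    att M (l ++ s) (k + 1) = l[k] := by
  simp only [att, Nat.add_sub_cancel]
  rw [List.getD_append _ _ _ _ hk, List.getD_eq_getElem _ _ hk]

theorem att_length_add_append (l s : List (V M)) {j : ℕ} (hj : 0 < j) :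
    att M (l ++ s) (l.length + j) = att M s j := by
  simp only [att]
  rw [List.getD_append_right _ _ _ _ (by lia)]
  congr 1
  lia

theorem map_att_range'_append (p l s : List (V M)) :
    (List.range' (p.length + 1) l.length).map (att M (p ++ (l ++ s))) = l := by
  refine List.ext_getElem (by simp) fun i _ hi => ?_
  rw [List.getElem_map, List.getElem_range', show p.length + 1 + 1 * i = p.length + (i + 1) by lia,
    att_length_add_append p _ i.succ_pos, att_succ_append hi]

theorem att_staTuple (Γ : M.State) (c : Fin M.m) :
    att M (staTuple M Γ) (c + 1) = Sum.inl (M.concept c Γ) := by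
  simp [att, staTuple]

theorem att_staTuple_one (Γ : M.State) : att M (staTuple M Γ) 1 = Sum.inl (idval M Γ) :=
  att_staTuple Γ ⟨0, M.m_pos⟩

theorem staTuple_eq_cons (Γ : M.State) :
    staTuple M Γ = Sum.inl (idval M Γ) :: (staTuple M Γ).tail := by
  have hpos : 0 < (staTuple M Γ).length := by simpa [staTuple] using M.m_pos
  obtain ⟨a, s, has⟩ := List.exists_cons_of_length_pos hpos
  have ha : a = Sum.inl (idval M Γ) := by simpa [has, att] using att_staTuple_one Γ
  rw [has, ha, List.tail_cons]

theorem att_append_of_mem_VTl {ks : List VKind} {l : List (V M)} (hl : l ∈ VTl M ks)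
    (s : List (V M)) {j : ℕ} (hj : 0 < j) : att M (l ++ s) (ks.length + j) = att M s j := by
  rw [List.Forall₂.length_eq hl, att_length_add_append l s hj]

theorem map_att_range'_of_mem_VTl {ks : List VKind} {l : List (V M)} (hl : l ∈ VTl M ks)
    (p s : List (V M)) (a : V M) :
    (List.range' (p.length + 1) (ks.length + 1)).map (att M (p ++ (l ++ a :: s))) = l ++ [a] := by
  rw [List.Forall₂.length_eq hl]
  simpa using map_att_range'_append p (l ++ [a]) s

end Attributes

section Assignments

/-- The assignment sending `ϱ₁,…,ϱₙ` to the entries of the tuple `l` and the remaining variables to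
the values of `w`, shifted by `n`. -/
def prependA (l : List (V M)) (w : ℕ → V M) : ℕ → V M := l.foldr (consA M) w

theorem prependA_of_lt {l : List (V M)} {k : ℕ} (hk : k < l.length) (w : ℕ → V M) :
    prependA l w k = l[k] := by
  induction l generalizing k with
  | nil => simp at hk
  | cons d l ih =>
    cases k with
    | zero => rfl
    | succ k => exact ih (Nat.lt_of_succ_lt_succ hk)

theorem prependA_length_add (l : List (V M)) (w : ℕ → V M) (k : ℕ) :
    prependA l w (l.length + k) = w k := by
  induction l with
  | nil => simp [prependA]
  | cons d l ih => rwa [List.length_cons, Nat.add_right_comm]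

theorem prependA_ofFn (n : ℕ) (v : ℕ → V M) :
    prependA (List.ofFn fun j : Fin n => v j) (fun k => v (n + k)) = v := by
  funext k
  obtain hk | ⟨j, rfl⟩ := (lt_or_ge k n).imp_right Nat.exists_eq_add_of_le
  · simp [prependA_of_lt, hk]
  · simpa using prependA_length_add (List.ofFn fun j : Fin n => v j) (fun k => v (n + k)) j

theorem Conf.ofFn_mem_VTl {ks : List VKind} {v : ℕ → V M} (hv : Conf M ks v) :
    (List.ofFn fun j : Fin ks.length => v j) ∈ VTl M ks :=
  List.forall₂_iff_get.2 ⟨by simp, fun i hi _ => by simpa using hv ⟨i, hi⟩⟩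

theorem exists_kindOk (k : VKind) : ∃ d, kindOk M k d := by
  cases k with
  | obj => exact ⟨_, M.obj_ne.some, rfl⟩
  | con => exact ⟨_, ⟨0, M.m_pos⟩, rfl⟩

theorem ttval_TT {ks : List VKind} {l : List (V M)} (hl : l ∈ VTl M ks) (Γ : M.State)
    (w : ℕ → V M) {t : OTm M} (ht : WFt M ks t) :
    ttval M (l ++ staTuple M Γ) (TT M ks.length t) = teval M (prependA l w) Γ t := by
  cases t with
  | const o => rfl
  | var k =>
    have hk : k < l.length := List.Forall₂.length_eq hl ▸ (List.getElem?_eq_some_iff.1 ht).1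
    exact (att_succ_append hk _).trans (prependA_of_lt hk w).symm
  | down c => exact (att_append_of_mem_VTl hl _ (Nat.succ_pos _)).trans (att_staTuple Γ c)

end Assignments

section Answers

/-- The answer relation of a property `P` of tuples and states: the tuples `⟨a₁,…,aₙ, id(Δ)⟩` with
`⟨a₁,…,aₙ⟩` of kinds `ks` and `P ⟨a₁,…,aₙ⟩ Δ`. -/
def answers (ks : List VKind) (P : List (V M) → M.State → Prop) : Inst M :=
  {t | ∃ l Δ, l ∈ VTl M ks ∧ P l Δ ∧ t = l ++ [Sum.inl (idval M Δ)]}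

variable {k : VKind} {ks : List VKind} {P Q : List (V M) → M.State → Prop}

theorem append_idval_mem_answers {l : List (V M)} (hl : l ∈ VTl M ks) {Γ : M.State} :
    l ++ [Sum.inl (idval M Γ)] ∈ answers ks P ↔ P l Γ := by
  refine ⟨?_, fun hP => ⟨l, Γ, hl, hP, rfl⟩⟩
  rintro ⟨l', Δ, -, hP, heq⟩
  obtain ⟨rfl, hid⟩ := List.append_inj' heq rfl
  obtain rfl : Γ = Δ := M.id_inj _ _ (Sum.inl.inj (List.cons.inj hid).1)
  exact hP

theorem answers_congr (h : ∀ l ∈ VTl M ks, ∀ Γ, P l Γ ↔ Q l Γ) : answers ks P = answers ks Q := by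
  ext t
  exact exists₂_congr fun l Γ => and_congr_right fun hl => and_congr_left' (h l hl Γ)

theorem answers_inter_answers :
    answers ks P ∩ answers ks Q = answers ks fun l Γ => P l Γ ∧ Q l Γ := by
  ext t
  constructor
  · rintro ⟨⟨l, Γ, hl, hP, rfl⟩, hQ⟩
    exact ⟨l, Γ, hl, ⟨hP, (append_idval_mem_answers hl).1 hQ⟩, rfl⟩
  · rintro ⟨l, Γ, hl, ⟨hP, hQ⟩, rfl⟩
    exact ⟨⟨l, Γ, hl, hP, rfl⟩, ⟨l, Γ, hl, hQ, rfl⟩⟩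

theorem answers_union_answers :
    answers ks P ∪ answers ks Q = answers ks fun l Γ => P l Γ ∨ Q l Γ := by
  ext t
  constructor
  · rintro (⟨l, Γ, hl, hP, rfl⟩ | ⟨l, Γ, hl, hQ, rfl⟩)
    exacts [⟨l, Γ, hl, Or.inl hP, rfl⟩, ⟨l, Γ, hl, Or.inr hQ, rfl⟩]
  · rintro ⟨l, Γ, hl, hP | hQ, rfl⟩
    exacts [Or.inl ⟨l, Γ, hl, hP, rfl⟩, Or.inr ⟨l, Γ, hl, hQ, rfl⟩]

theorem answers_diff_answers :
    answers ks P \ answers ks Q = answers ks fun l Γ => P l Γ ∧ ¬ Q l Γ := by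
  ext t
  constructor
  · rintro ⟨⟨l, Γ, hl, hP, rfl⟩, hQ⟩
    exact ⟨l, Γ, hl, ⟨hP, mt (append_idval_mem_answers hl).2 hQ⟩, rfl⟩
  · rintro ⟨l, Γ, hl, ⟨hP, hQ⟩, rfl⟩
    exact ⟨⟨l, Γ, hl, hP, rfl⟩, mt (append_idval_mem_answers hl).1 hQ⟩

theorem cprod_VTl_proj_Sta :
    cprod M (VTl M ks) (proj M [1] (Sta M)) = answers ks fun _ _ => True := by
  have hproj (Γ : M.State) : [1].map (att M (staTuple M Γ)) = [Sum.inl (idval M Γ)] :=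
    congrArg (fun a => [a]) (att_staTuple_one Γ)
  ext t
  constructor
  · rintro ⟨l, hl, _, ⟨_, ⟨Γ, rfl⟩, rfl⟩, rfl⟩
    exact ⟨l, Γ, hl, trivial, by rw [hproj]⟩
  · rintro ⟨l, Γ, hl, -, rfl⟩
    exact ⟨l, hl, _, ⟨_, ⟨Γ, rfl⟩, rfl⟩, by rw [hproj]⟩

theorem cprod_VTl_proj_Sta_diff_answers :
    cprod M (VTl M ks) (proj M [1] (Sta M)) \ answers ks P = answers ks fun l Γ => ¬ P l Γ := by
  simp only [cprod_VTl_proj_Sta, answers_diff_answers, true_and]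

theorem cprod_VTl_singleton_answers :
    cprod M (VTl M [k]) (answers ks P) = answers (k :: ks) fun l Γ => P l.tail Γ := by
  ext t
  constructor
  · rintro ⟨_, _ | ⟨hd, _ | _⟩, _, ⟨l, Γ, hl, hP, rfl⟩, rfl⟩
    exact ⟨_ :: l, Γ, .cons hd hl, hP, rfl⟩
  · rintro ⟨_, Γ, _ | ⟨hd, hl⟩, hP, rfl⟩
    exact ⟨[_], .cons hd .nil, _, ⟨_, Γ, hl, hP, rfl⟩, rfl⟩

theorem proj_sep_cprod_VTl_Sta (C : List (V M) → Prop) :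
    proj M (List.range' 1 (ks.length + 1)) {t | t ∈ cprod M (VTl M ks) (Sta M) ∧ C t} =
      answers ks fun l Γ => C (l ++ staTuple M Γ) := by
  have hproj {l : List (V M)} (hl : l ∈ VTl M ks) (Γ : M.State) :
      (List.range' 1 (ks.length + 1)).map (att M (l ++ staTuple M Γ)) =
        l ++ [Sum.inl (idval M Γ)] := by
    rw [staTuple_eq_cons]
    exact map_att_range'_of_mem_VTl hl [] _ _
  ext t
  constructor
  · rintro ⟨_, ⟨⟨l, hl, _, ⟨Γ, rfl⟩, rfl⟩, hC⟩, rfl⟩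
    exact ⟨l, Γ, hl, hC, hproj hl Γ⟩
  · rintro ⟨l, Γ, hl, hC, rfl⟩
    exact ⟨_, ⟨⟨l, hl, _, ⟨Γ, rfl⟩, rfl⟩, hC⟩, (hproj hl Γ).symm⟩

theorem selC_selEq_cprod_answers_RelI (r : M.RelSym) :
    selC M (ks.length + 4) (Sum.inr (Sum.inr r))
        (selEq M (ks.length + 1) (ks.length + 3) (cprod M (answers ks P) (RelI M))) =
      {t | ∃ l Γ Δ, l ∈ VTl M ks ∧ M.acc r Γ Δ ∧ P l Δ ∧
        t = l ++ [Sum.inl (idval M Δ), Sum.inl (idval M Γ), Sum.inl (idval M Δ),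
          Sum.inr (Sum.inr r)]} := by
  ext t
  constructor
  · rintro ⟨⟨⟨_, ⟨l, Δ, hl, hP, rfl⟩, _, ⟨r', Γ, Δ', hacc, rfl⟩, rfl⟩, hid⟩, hrel⟩
    rw [List.append_assoc, att_append_of_mem_VTl hl _ one_pos,
      att_append_of_mem_VTl hl _ three_pos] at hid
    rw [List.append_assoc, att_append_of_mem_VTl hl _ four_pos] at hrel
    obtain rfl : Δ = Δ' := M.id_inj _ _ (Sum.inl.inj hid)
    obtain rfl : r' = r := Sum.inr.inj (Sum.inr.inj hrel)
    exact ⟨l, Γ, Δ, hl, hacc, hP, List.append_assoc _ _ _⟩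
  · rintro ⟨l, Γ, Δ, hl, hacc, hP, rfl⟩
    refine ⟨⟨⟨_, ⟨l, Δ, hl, hP, rfl⟩, _, ⟨r, Γ, Δ, hacc, rfl⟩, by simp⟩, ?_⟩, ?_⟩
    · rw [att_append_of_mem_VTl hl _ one_pos, att_append_of_mem_VTl hl _ three_pos]
      rfl
    · exact att_append_of_mem_VTl hl _ four_pos

theorem proj_join_answers_RelI (r : M.RelSym) :
    proj M (List.range' 1 ks.length ++ [ks.length + 2])
        (selC M (ks.length + 4) (Sum.inr (Sum.inr r))
          (selEq M (ks.length + 1) (ks.length + 3) (cprod M (answers ks P) (RelI M)))) =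
      answers ks fun l Γ => ∃ Δ, M.acc r Γ Δ ∧ P l Δ := by
  have hproj {l : List (V M)} (hl : l ∈ VTl M ks) (a b : V M) (s : List (V M)) :
      (List.range' 1 ks.length ++ [ks.length + 2]).map (att M (l ++ a :: b :: s)) = l ++ [b] := by
    rw [List.map_append, List.map_singleton, att_append_of_mem_VTl hl _ two_pos,
      List.Forall₂.length_eq hl]
    exact congrArg (· ++ [b]) (map_att_range'_append [] l _)
  rw [selC_selEq_cprod_answers_RelI]
  ext t
  constructor
  · rintro ⟨_, ⟨l, Γ, Δ, hl, hacc, hP, rfl⟩, rfl⟩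
    exact ⟨l, Γ, hl, ⟨Δ, hacc, hP⟩, hproj hl _ _ _⟩
  · rintro ⟨l, Γ, hl, ⟨Δ, hacc, hP⟩, rfl⟩
    exact ⟨_, ⟨l, Γ, Δ, hl, hacc, hP, rfl⟩, (hproj hl _ _ _).symm⟩

theorem proj_answers_cons :
    proj M (List.range' 2 (ks.length + 1)) (answers (k :: ks) P) =
      answers ks fun l Γ => ∃ d, kindOk M k d ∧ P (d :: l) Γ := by
  ext t
  constructor
  · rintro ⟨_, ⟨_, Γ, _ | ⟨hd, hl⟩, hP, rfl⟩, rfl⟩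
    exact ⟨_, Γ, hl, ⟨_, hd, hP⟩, map_att_range'_of_mem_VTl hl [_] [] _⟩
  · rintro ⟨l, Γ, hl, ⟨d, hd, hP⟩, rfl⟩
    exact ⟨_, ⟨d :: l, Γ, .cons hd hl, hP, rfl⟩, (map_att_range'_of_mem_VTl hl [d] [] _).symm⟩

-- The first projection yields `∃ d`, which `∀ d` implies because the domain of `k` is nonempty.
theorem division_answers_cons :
    proj M (List.range' 2 (ks.length + 1)) (answers (k :: ks) P) \
        proj M (List.range' 2 (ks.length + 1))
          (cprod M (VTl M [k]) (proj M (List.range' 2 (ks.length + 1)) (answers (k :: ks) P)) \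
            answers (k :: ks) P) =
      answers ks fun l Γ => ∀ d, kindOk M k d → P (d :: l) Γ := by
  rw [proj_answers_cons, cprod_VTl_singleton_answers, answers_diff_answers, proj_answers_cons,
    answers_diff_answers]
  refine answers_congr fun l _ Γ => ⟨?_, fun hall => ?_⟩
  · rintro ⟨hex, hno_counterexample⟩ d hd
    by_contra hP
    exact hno_counterexample ⟨d, hd, hex, hP⟩
  · obtain ⟨d₀, hd₀⟩ := exists_kindOk (M := M) k
    exact ⟨⟨d₀, hd₀, hall d₀ hd₀⟩, fun ⟨d, hd, _, hP⟩ => hP (hall d hd)⟩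

theorem selEq_selEq_cprod_answers_proj_Sta (c : Fin M.m) :
    selEq M 1 (ks.length + 3)
        (selEq M (ks.length + 2) (ks.length + 4)
          (cprod M (answers (VKind.obj :: ks) P) (proj M [c + 1, 1] (Sta M)))) =
      {t | ∃ l Γ, l ∈ VTl M ks ∧ P (Sum.inl (M.concept c Γ) :: l) Γ ∧
        t = Sum.inl (M.concept c Γ) :: (l ++ [Sum.inl (idval M Γ),
          Sum.inl (M.concept c Γ), Sum.inl (idval M Γ)])} := by
  have hsta (Γ : M.State) : [c.val + 1, 1].map (att M (staTuple M Γ)) =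
      [Sum.inl (M.concept c Γ), Sum.inl (idval M Γ)] := by
    simp only [List.map_cons, List.map_nil, att_staTuple, att_staTuple_one]
  have hatt {d : V M} {l : List (V M)} (hdl : d :: l ∈ VTl M (VKind.obj :: ks)) (a b e : V M) :
      att M (d :: (l ++ [a, b, e])) (ks.length + 2) = a ∧
      att M (d :: (l ++ [a, b, e])) (ks.length + 3) = b ∧
      att M (d :: (l ++ [a, b, e])) (ks.length + 4) = e := by
    have hshift {j : ℕ} (hj : 0 < j) :
        att M (d :: (l ++ [a, b, e])) (ks.length + 1 + j) = att M [a, b, e] j :=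
      att_append_of_mem_VTl hdl _ hj
    exact ⟨hshift one_pos, hshift two_pos, hshift three_pos⟩
  ext t
  constructor
  · rintro ⟨⟨⟨_, ⟨_, Γ, _ | ⟨hd, hl⟩, hP, rfl⟩, _, ⟨_, ⟨Δ, rfl⟩, rfl⟩, rfl⟩, hid⟩, hval⟩
    obtain ⟨hid₁, hval₂, hid₂⟩ := hatt (.cons hd hl) (Sum.inl (idval M Γ))
      (Sum.inl (M.concept c Δ)) (Sum.inl (idval M Δ))
    rw [hsta, List.append_assoc] at hid hval ⊢
    obtain rfl : Γ = Δ := M.id_inj _ _ (Sum.inl.inj (hid₁.symm.trans (hid.trans hid₂)))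
    obtain rfl := hval.trans hval₂
    exact ⟨_, Γ, hl, hP, rfl⟩
  · rintro ⟨l, Γ, hl, hP, rfl⟩
    have hdl : Sum.inl (M.concept c Γ) :: l ∈ VTl M (VKind.obj :: ks) := .cons ⟨_, rfl⟩ hl
    obtain ⟨hid₁, hval₂, hid₂⟩ := hatt hdl (Sum.inl (idval M Γ))
      (Sum.inl (M.concept c Γ)) (Sum.inl (idval M Γ))
    exact ⟨⟨⟨_, ⟨_, Γ, hdl, hP, rfl⟩, _, ⟨_, ⟨Γ, rfl⟩, rfl⟩, by simp [hsta]⟩,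
      hid₁.trans hid₂.symm⟩, hval₂.symm⟩

theorem proj_join_answers_Sta (c : Fin M.m) :
    proj M (List.range' 2 (ks.length + 1))
        (selEq M 1 (ks.length + 3)
          (selEq M (ks.length + 2) (ks.length + 4)
            (cprod M (answers (VKind.obj :: ks) P) (proj M [c + 1, 1] (Sta M))))) =
      answers ks fun l Γ => P (Sum.inl (M.concept c Γ) :: l) Γ := by
  rw [selEq_selEq_cprod_answers_proj_Sta]
  ext t
  constructor
  · rintro ⟨_, ⟨l, Γ, hl, hP, rfl⟩, rfl⟩
    exact ⟨l, Γ, hl, hP, map_att_range'_of_mem_VTl hl [_] _ _⟩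
  · rintro ⟨l, Γ, hl, hP, rfl⟩
    exact ⟨_, ⟨l, Γ, hl, hP, rfl⟩, (map_att_range'_of_mem_VTl hl [_] _ _).symm⟩

end Answers

theorem FT_eq_answers (w : ℕ → V M) {φ : Fma M} {ks : List VKind} (hφ : WF M ks φ) :
    FT M ks φ = answers ks fun l Γ => Truth M Γ (prependA l w) φ := by
  induction φ generalizing ks with
  | eq t₁ t₂ =>
    refine (proj_sep_cprod_VTl_Sta _).trans (answers_congr fun l hl Γ => ?_)
    rw [ttval_TT hl Γ w hφ.1, ttval_TT hl Γ w hφ.2, Truth]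
  | ne t₁ t₂ =>
    refine (proj_sep_cprod_VTl_Sta _).trans (answers_congr fun l hl Γ => ?_)
    rw [ttval_TT hl Γ w hφ.1, ttval_TT hl Γ w hφ.2, Truth]
  | not φ ih => simp only [FT, Truth, ih hφ, cprod_VTl_proj_Sta_diff_answers]
  | and φ ψ ihφ ihψ => simp only [FT, Truth, ihφ hφ.1, ihψ hφ.2, answers_inter_answers]
  | or φ ψ ihφ ihψ => simp only [FT, Truth, ihφ hφ.1, ihψ hφ.2, answers_union_answers]
  | dia r φ ih => simp only [FT, Truth, ih hφ, proj_join_answers_RelI]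
  | box r φ ih =>
    simp only [FT, Truth, ih hφ, cprod_VTl_proj_Sta_diff_answers, proj_join_answers_RelI,
      not_exists, not_and, not_not]
  | ex k φ ih =>
    simp only [FT, Truth, ih hφ, proj_answers_cons]
    rfl
  | all k φ ih =>
    simp only [FT, Truth, ih hφ, division_answers_cons]
    rfl
  | lam c φ ih =>
    simp only [FT, Truth, ih hφ, proj_join_answers_Sta]
    rfl

/-- **Correspondence theorem.** Fix a model-state pair `M,Γ`, an
assignment `v` (conforming to the kinds `ks` of the free variables `ϱ₁,…,ϱₙ`), and the
object constant `i` such that `I(i) = (v*I)(↓id,Γ)` (i.e. `i` is the id-value of `Γ`).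
Then for every modal query `φ(ϱ₁,…,ϱₙ)`:
`M,Γ ⊩_v φ(ϱ₁,…,ϱₙ)` iff `⟨v(ϱ₁),…,v(ϱₙ), i⟩ ∈ FT(φ(ϱ₁,…,ϱₙ))(I_M)`. -/
theorem correspondence (M : Model) (Γ : M.State) (ks : List VKind) (φ : Fma M)
    (hWF : WF M ks φ) (v : ℕ → V M) (hv : Conf M ks v)
    (i : M.Obj) (hi : i = idval M Γ) :
    Truth M Γ v φ ↔
      (List.ofFn (fun j : Fin ks.length => v j) ++ [Sum.inl i]) ∈ FT M ks φ := by
  rw [hi, FT_eq_answers (fun k => v (ks.length + k)) hWF, append_idval_mem_answers hv.ofFn_mem_VTl,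
    prependA_ofFn]

end KripkeDB
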